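/- arXiv:math/0003140 — 3 statements merged into one kernel-verified Lean document; each statement's English description precedes it below -/
import Mathlib

section
/- Let (K, ν) be a measure space with ν a finite measure, let ε > 0, C > 0, and let E be a real normed vector space. Equip (0, ε] × K with the product of Lebesgue measure λ on (0, ε] and ν. Let ψ : (0, ε] × K → E and σ : (0, ε] × K → ℝ be measurable, suppose e^{-σ(t,k)} ≤ C·t for all (t,k) ∈ (0, ε] × K, and suppose ∫_{(0,ε]×K} e^{σ(t,k)} ‖ψ(t,k)‖² d(λ⊗ν)(t,k) < ∞. Then there exists a sequence (t_i) in (0, ε] with t_i → 0 such that ∫_K ‖ψ(t_i, k)‖² dν(k) → 0 (in particular these slice integrals are finite for all i). -/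
open MeasureTheory Filter
open scoped ENNReal

/-!
The bound `1 / t ≤ C e^σ` makes `t ↦ F t / t` integrable on `(0, ε]`, where `F t` is the integral
of `‖ψ‖²` over the slice at time `t`. Since `1 / t` has infinite integral over every neighbourhood
of `0`, `F` cannot be bounded below by a positive constant near `0`, so `0` is a cluster value of
`F` at `0⁺`.
-/

open Set Topology

theorem setLIntegral_ofReal_inv_eq_top_of_mem_nhdsGT_zero {s : Set ℝ} (hs : s ∈ 𝓝[>] 0) :
    ∫⁻ t in s, ENNReal.ofReal t⁻¹ = ⊤ := by
  obtain ⟨a, ha : 0 < a, has⟩ := mem_nhdsGT_iff_exists_Ioc_subset.1 hs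
  have not_integrable : ¬ IntegrableOn (fun t : ℝ ↦ t⁻¹) (Ioc 0 a) := by
    rw [← intervalIntegrable_iff_integrableOn_Ioc_of_le ha.le, intervalIntegrable_inv_iff]
    simp [ha.ne]
  have inv_nonneg_ae : 0 ≤ᵐ[volume.restrict (Ioc 0 a)] fun t : ℝ ↦ t⁻¹ :=
    (ae_restrict_mem measurableSet_Ioc).mono fun t ht ↦ inv_nonneg.2 ht.1.le
  have lintegral_Ioc_eq_top : ∫⁻ t in Ioc 0 a, ENNReal.ofReal t⁻¹ = ⊤ := by
    by_contra h
    exact not_integrable ((lintegral_ofReal_ne_top_iff_integrable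
      measurable_inv.aestronglyMeasurable inv_nonneg_ae).1 h)
  exact eq_top_mono (lintegral_mono_set has) lintegral_Ioc_eq_top

theorem mapClusterPt_zero_of_lintegral_mul_ne_top {α : Type*} [MeasurableSpace α] {μ : Measure α}
    {l : Filter α} [l.IsMeasurablyGenerated] {w F : α → ℝ≥0∞}
    (hw : ∀ s ∈ l, ∫⁻ x in s, w x ∂μ = ⊤) (hwF : ∫⁻ x, w x * F x ∂μ ≠ ⊤) :
    MapClusterPt 0 l F := by
  refine ENNReal.nhds_zero_basis.mapClusterPt_iff_frequently.2 fun δ hδ ↦ ?_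
  by_contra h
  obtain ⟨s, hsl, hs, hδF⟩ := (not_frequently.1 h).exists_measurable_mem
  refine hwF (top_le_iff.1 ?_)
  calc
    ⊤ = δ * ∫⁻ x in s, w x ∂μ := by rw [hw s hsl, ENNReal.mul_top hδ.ne']
    _ ≤ ∫⁻ x in s, δ * w x ∂μ := lintegral_const_mul_le δ w
    _ ≤ ∫⁻ x in s, w x * F x ∂μ := setLIntegral_mono' hs fun x hx ↦ by
      rw [mul_comm]
      gcongr
      exact not_lt.1 (hδF x hx)
    _ ≤ ∫⁻ x, w x * F x ∂μ := setLIntegral_le_lintegral s _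

theorem lintegral_mul_lintegral_le_lintegral_prod {α β : Type*} [MeasurableSpace α]
    [MeasurableSpace β] {μ : Measure α} {ν : Measure β} [SFinite ν] {w : α → ℝ≥0∞}
    {g : α × β → ℝ≥0∞} (hwg : AEMeasurable (fun p ↦ w p.1 * g p) (μ.prod ν)) :
    ∫⁻ x, w x * ∫⁻ y, g (x, y) ∂ν ∂μ ≤ ∫⁻ p, w p.1 * g p ∂μ.prod ν := by
  rw [lintegral_prod _ hwg]
  exact lintegral_mono fun x ↦ lintegral_const_mul_le (w x) _

theorem inv_le_mul_exp_of_exp_neg_le_mul {C s t : ℝ} (ht : 0 < t) (h : Real.exp (-s) ≤ C * t) :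
    t⁻¹ ≤ C * Real.exp s := by
  rw [inv_le_iff_one_le_mul₀ ht]
  calc
    1 = Real.exp (-s) * Real.exp s := by rw [← Real.exp_add, neg_add_cancel, Real.exp_zero]
    _ ≤ C * t * Real.exp s := by gcongr
    _ = C * Real.exp s * t := by ring

theorem lintegral_ofReal_inv_mul_ne_top_of_exp_neg_le_mul {α : Type*} [MeasurableSpace α]
    {μ : Measure α} {C : ℝ} {τ σ f : α → ℝ} (hτ : ∀ᵐ x ∂μ, 0 < τ x)
    (hbound : ∀ᵐ x ∂μ, Real.exp (-σ x) ≤ C * τ x)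
    (hfin : ∫⁻ x, ENNReal.ofReal (Real.exp (σ x) * f x) ∂μ ≠ ⊤) :
    ∫⁻ x, ENNReal.ofReal (τ x)⁻¹ * ENNReal.ofReal (f x) ∂μ ≠ ⊤ := by
  refine ne_top_of_le_ne_top (ENNReal.mul_ne_top (ENNReal.ofReal_ne_top (r := C)) hfin) ?_
  rw [← lintegral_const_mul' _ _ ENNReal.ofReal_ne_top]
  refine lintegral_mono_ae ?_
  filter_upwards [hτ, hbound] with x hτx hx
  calc
    ENNReal.ofReal (τ x)⁻¹ * ENNReal.ofReal (f x)
    _ ≤ ENNReal.ofReal (C * Real.exp (σ x)) * ENNReal.ofReal (f x) := by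
      gcongr
      exact inv_le_mul_exp_of_exp_neg_le_mul hτx hx
    _ = ENNReal.ofReal C * ENNReal.ofReal (Real.exp (σ x) * f x) := by
      rw [ENNReal.ofReal_mul' (Real.exp_pos _).le, ENNReal.ofReal_mul (Real.exp_pos _).le,
        mul_assoc]

theorem mapClusterPt_zero_lintegral_slice {K : Type*} [MeasurableSpace K] {ν : Measure K}
    [SFinite ν] {ε : ℝ} (hε : 0 < ε) {g : ℝ × K → ℝ≥0∞}
    (hg : AEMeasurable g ((volume.restrict (Ioc 0 ε)).prod ν))
    (hfin : ∫⁻ p, ENNReal.ofReal p.1⁻¹ * g p ∂(volume.restrict (Ioc 0 ε)).prod ν ≠ ⊤) :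
    MapClusterPt 0 (𝓝[>] 0) fun t ↦ ∫⁻ k, g (t, k) ∂ν := by
  have lintegral_inv_eq_top (s : Set ℝ) (hs : s ∈ 𝓝[>] 0) :
      ∫⁻ t in s, ENNReal.ofReal t⁻¹ ∂volume.restrict (Ioc 0 ε) = ⊤ := by
    rw [Measure.restrict_restrict' measurableSet_Ioc]
    exact setLIntegral_ofReal_inv_eq_top_of_mem_nhdsGT_zero (inter_mem hs (Ioc_mem_nhdsGT hε))
  have aemeasurable_inv_mul : AEMeasurable (fun p : ℝ × K ↦ ENNReal.ofReal p.1⁻¹ * g p)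
      ((volume.restrict (Ioc 0 ε)).prod ν) :=
    measurable_fst.inv.ennreal_ofReal.aemeasurable.mul hg
  exact mapClusterPt_zero_of_lintegral_mul_ne_top lintegral_inv_eq_top
    (ne_top_of_le_ne_top hfin (lintegral_mul_lintegral_le_lintegral_prod aemeasurable_inv_mul))

theorem exists_seq_slice_lintegral_tendsto_zero_general
    {K : Type*} [MeasurableSpace K] {ν : Measure K} [SFinite ν] {ε C : ℝ} (hε : 0 < ε)
    {E : Type*} [NormedAddCommGroup E] [MeasurableSpace E] [OpensMeasurableSpace E]
    {ψ : ℝ × K → E} {σ : ℝ × K → ℝ}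
    (hψ : AEMeasurable ψ ((volume.restrict (Ioc 0 ε)).prod ν))
    (hbound : ∀ᵐ p ∂(volume.restrict (Ioc 0 ε)).prod ν, Real.exp (-σ p) ≤ C * p.1)
    (hfin : ∫⁻ p, ENNReal.ofReal (Real.exp (σ p) * ‖ψ p‖ ^ 2)
        ∂(volume.restrict (Ioc 0 ε)).prod ν < ⊤) :
    ∃ t : ℕ → ℝ, (∀ i, t i ∈ Ioc 0 ε) ∧
      Tendsto t atTop (𝓝 0) ∧
      (∀ i, ∫⁻ k, ENNReal.ofReal (‖ψ (t i, k)‖ ^ 2) ∂ν < ⊤) ∧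
      Tendsto (fun i ↦ ∫⁻ k, ENNReal.ofReal (‖ψ (t i, k)‖ ^ 2) ∂ν) atTop (𝓝 0) := by
  have time_pos : ∀ᵐ p ∂(volume.restrict (Ioc 0 ε)).prod ν, 0 < p.1 :=
    Measure.quasiMeasurePreserving_fst.ae
      ((ae_restrict_mem measurableSet_Ioc).mono fun _ ht ↦ ht.1)
  have lintegral_inv_mul_ne_top :=
    lintegral_ofReal_inv_mul_ne_top_of_exp_neg_le_mul time_pos hbound hfin.ne
  obtain ⟨t, hslice, ht⟩ := (mapClusterPt_zero_lintegral_slice hε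
    (hψ.norm.pow_const 2).ennreal_ofReal lintegral_inv_mul_ne_top).exists_seq_tendsto
  obtain ⟨N, hN⟩ := eventually_atTop.1
    ((ht.eventually (Ioc_mem_nhdsGT hε)).and (hslice.eventually_lt_const ENNReal.zero_lt_top))
  exact ⟨fun i ↦ t (i + N), fun i ↦ (hN _ (N.le_add_left i)).1,
    (tendsto_nhds_of_tendsto_nhdsWithin ht).comp (tendsto_add_atTop_nat N),
    fun i ↦ (hN _ (N.le_add_left i)).2, hslice.comp (tendsto_add_atTop_nat N)⟩

/-- The main analytic lemma in the proof of Theorem 1: if `e^{-σ(t,k)} ≤ C t` on the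
collar `(0,ε] × K` and `∫ e^σ ‖ψ‖²` is finite, then the slice `L²`-norms of `ψ`
tend to zero along a sequence of times `t_i → 0`. -/
theorem exists_seq_slice_lintegral_tendsto_zero
    {K : Type*} [MeasurableSpace K] (ν : Measure K) [IsFiniteMeasure ν]
    (ε C : ℝ) (hε : 0 < ε) (hC : 0 < C)
    {E : Type*} [NormedAddCommGroup E] [NormedSpace ℝ E] [MeasurableSpace E] [BorelSpace E]
    (ψ : ℝ × K → E) (σ : ℝ × K → ℝ) (hψ : Measurable ψ) (hσ : Measurable σ)
    (hbound : ∀ t ∈ Set.Ioc (0 : ℝ) ε, ∀ k : K, Real.exp (-σ (t, k)) ≤ C * t)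
    (hfin : ∫⁻ p, ENNReal.ofReal (Real.exp (σ p) * ‖ψ p‖ ^ 2)
        ∂((volume.restrict (Set.Ioc (0 : ℝ) ε)).prod ν) < ⊤) :
    ∃ t : ℕ → ℝ, (∀ i, t i ∈ Set.Ioc (0 : ℝ) ε) ∧
      Tendsto t atTop (nhds 0) ∧
      (∀ i, ∫⁻ k, ENNReal.ofReal (‖ψ (t i, k)‖ ^ 2) ∂ν < ⊤) ∧
      Tendsto (fun i => ∫⁻ k, ENNReal.ofReal (‖ψ (t i, k)‖ ^ 2) ∂ν) atTop (nhds 0) := by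
  have mem_Ioc := ae_restrict_mem (μ := volume) (measurableSet_Ioc (a := 0) (b := ε))
  exact exists_seq_slice_lintegral_tendsto_zero_general hε hψ.aemeasurable
    ((Measure.quasiMeasurePreserving_fst.ae mem_Ioc).mono fun p hp ↦ hbound p.1 hp p.2) hfin
end

section
/- Let (K, d_K) be a compact metric space equipped with a finite Borel measure ν, let ε > 0, and let E be a real normed vector space. Equip (0, ε] × K with the product of Lebesgue measure λ on (0, ε] and ν, and equip [0, ε] × K with the product metric. Let σ : (0, ε] × K → ℝ be Borel measurable, and suppose there is a locally Lipschitz function F : [0, ε] × K → ℝ with F(t, k) = e^{-σ(t,k)} for all (t, k) ∈ (0, ε] × K and F(0, k) = 0 for all k ∈ K. Let ψ : (0, ε] × K → E be measurable with ∫_{(0,ε]×K} e^{σ(t,k)} ‖ψ(t,k)‖² d(λ⊗ν)(t,k) < ∞. Then there exists a sequence (t_i) in (0, ε] with t_i → 0 such that ∫_K ‖ψ(t_i, k)‖² dν(k) → 0. -/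
open MeasureTheory Filter
open scoped ENNReal

/-!
Let `G t = ∫ e^σ ‖ψ (t, ·)‖² dν`. As `F` is globally Lipschitz by compactness, `e^{-σ} ≤ C t`, so
the slice integral of `‖ψ‖²` at time `t` is at most `C * (t * G t)`. If `t * G t` stayed above some
`η > 0` near `t = 0`, then `G` would dominate the non-integrable function `η / t`.
-/

open Set
open scoped Topology NNReal

section Lintegral

variable {α : Type*} [MeasurableSpace α] {μ : Measure α}

lemma mapClusterPt_zero_mul_of_setLIntegral_inv_eq_top {l : Filter α} [l.IsMeasurablyGenerated]
    {v g : α → ℝ≥0∞} (hv : ∀ s ∈ l, ∫⁻ x in s, (v x)⁻¹ ∂μ = ⊤) {s : Set α} (hs : s ∈ l)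
    (hg : ∫⁻ x in s, g x ∂μ ≠ ⊤) : MapClusterPt 0 l (fun x => v x * g x) := by
  rw [ENNReal.nhds_zero_basis.mapClusterPt_iff_frequently]
  intro η hη
  by_contra hfreq
  have hlarge : ∀ᶠ x in l, η ≤ v x * g x := by
    simpa only [not_frequently, mem_Iio, not_lt] using hfreq
  obtain ⟨t, ht, htm, hts⟩ := (hlarge.and hs).exists_measurable_mem
  refine hg (top_unique ?_)
  calc ⊤ = η * ∫⁻ x in t, (v x)⁻¹ ∂μ := by rw [hv t ht, ENNReal.mul_top hη.ne']
    _ ≤ ∫⁻ x in t, η * (v x)⁻¹ ∂μ := lintegral_const_mul_le _ _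
    _ ≤ ∫⁻ x in t, g x ∂μ :=
      setLIntegral_mono' htm fun x hx => ENNReal.div_le_of_le_mul' (hts x hx).1
    _ ≤ ∫⁻ x in s, g x ∂μ := lintegral_mono_set fun x hx => (hts x hx).2

lemma lintegral_ofReal_le_mul_lintegral_exp_mul {c : ℝ} {σ f : α → ℝ}
    (hσ : ∀ᵐ x ∂μ, Real.exp (-σ x) ≤ c) (hf : ∀ᵐ x ∂μ, 0 ≤ f x) :
    ∫⁻ x, ENNReal.ofReal (f x) ∂μ
      ≤ ENNReal.ofReal c * ∫⁻ x, ENNReal.ofReal (Real.exp (σ x) * f x) ∂μ := by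
  rw [← lintegral_const_mul' _ _ ENNReal.ofReal_ne_top]
  refine lintegral_mono_ae ?_
  filter_upwards [hσ, hf] with x hσx hfx
  have hweight : 0 ≤ Real.exp (σ x) * f x := mul_nonneg (Real.exp_pos _).le hfx
  rw [← ENNReal.ofReal_mul' hweight]
  refine ENNReal.ofReal_le_ofReal ?_
  calc f x = Real.exp (-σ x) * (Real.exp (σ x) * f x) := by
        rw [← mul_assoc, ← Real.exp_add, neg_add_cancel, Real.exp_zero, one_mul]
    _ ≤ c * (Real.exp (σ x) * f x) := mul_le_mul_of_nonneg_right hσx hweight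

end Lintegral

lemma setLIntegral_inv_ofReal_eq_top {s : Set ℝ} (hs : s ∈ 𝓝[>] (0 : ℝ)) :
    ∫⁻ t in s, (ENNReal.ofReal t)⁻¹ = ⊤ := by
  obtain ⟨a, ha, has⟩ := mem_nhdsGT_iff_exists_Ioc_subset.1 hs
  refine top_unique (le_trans ?_ (lintegral_mono_set has))
  rw [setLIntegral_congr_fun measurableSet_Ioc fun t ht => (ENNReal.ofReal_inv_of_pos ht.1).symm]
  by_contra hfin
  have hint : IntegrableOn (fun t : ℝ => t⁻¹) (Ioc 0 a) :=
    (lintegral_ofReal_ne_top_iff_integrable measurable_inv.aestronglyMeasurable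
      (ae_restrict_of_forall_mem measurableSet_Ioc fun t ht => inv_nonneg.2 ht.1.le)).1
      fun h => hfin h.ge
  rcases intervalIntegrable_inv_iff.1
    ((intervalIntegrable_iff_integrableOn_Ioc_of_le (mem_Ioi.1 ha).le).2 hint) with h | h
  · exact (mem_Ioi.1 ha).ne h
  · exact h left_mem_uIcc

lemma exists_seq_tendsto_ofReal_mul_of_setLIntegral_ne_top {ε : ℝ} (hε : 0 < ε) {G : ℝ → ℝ≥0∞}
    (hG : ∫⁻ t in Ioc 0 ε, G t ≠ ⊤) :
    ∃ t : ℕ → ℝ, (∀ i, t i ∈ Ioc 0 ε) ∧ Tendsto t atTop (𝓝 0) ∧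
      Tendsto (fun i => ENNReal.ofReal (t i) * G (t i)) atTop (𝓝 0) := by
  obtain ⟨t, hlim, ht⟩ := (mapClusterPt_zero_mul_of_setLIntegral_inv_eq_top
    (fun _ => setLIntegral_inv_ofReal_eq_top) (Ioc_mem_nhdsGT hε) hG).exists_seq_tendsto
  obtain ⟨N, hN⟩ := eventually_atTop.1 (ht.eventually (Ioc_mem_nhdsGT hε))
  have hshift := tendsto_add_atTop_nat N
  exact ⟨fun i => t (i + N), fun i => hN _ le_add_self,
    (tendsto_nhds_of_tendsto_nhdsWithin ht).comp hshift, hlim.comp hshift⟩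

lemma exists_forall_norm_le_mul_dist_of_locallyLipschitz {X K V : Type*} [PseudoMetricSpace X]
    [CompactSpace X] [PseudoMetricSpace K] [CompactSpace K] [SeminormedAddCommGroup V]
    {F : X × K → V} (hF : LocallyLipschitz F) {x₀ : X} (hF0 : ∀ k, F (x₀, k) = 0) :
    ∃ C : ℝ≥0, ∀ x k, ‖F (x, k)‖ ≤ C * dist x x₀ := by
  obtain ⟨C, hC⟩ :=
    (hF.locallyLipschitzOn (s := univ)).exists_lipschitzOnWith_of_compact isCompact_univ
  refine ⟨C, fun x k => ?_⟩
  calc ‖F (x, k)‖ = dist (F (x, k)) (F (x₀, k)) := by rw [hF0, dist_zero_right]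
    _ ≤ C * dist (x, k) (x₀, k) := (lipschitzOnWith_univ.1 hC).dist_le_mul _ _
    _ = C * dist x x₀ := by rw [dist_prod_same_right]

theorem exists_seq_slice_lintegral_tendsto_zero_of_locallyLipschitz_general
    {K : Type*} [PseudoMetricSpace K] [CompactSpace K]
    [MeasurableSpace K] (ν : Measure K) [SFinite ν]
    (ε : ℝ) (hε : 0 < ε)
    {E : Type*} [SeminormedAddCommGroup E] [MeasurableSpace E] [OpensMeasurableSpace E]
    (σ : ℝ × K → ℝ) (hσ : Measurable σ)
    (F : Set.Icc (0 : ℝ) ε × K → ℝ) (hF : LocallyLipschitz F)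
    (hFσ : ∀ (t : Set.Icc (0 : ℝ) ε) (k : K), 0 < (t : ℝ) → F (t, k) = Real.exp (-σ ((t : ℝ), k)))
    (hF0 : ∀ k : K, F (⟨0, Set.left_mem_Icc.2 hε.le⟩, k) = 0)
    (ψ : ℝ × K → E) (hψ : Measurable ψ)
    (hfin : ∫⁻ p, ENNReal.ofReal (Real.exp (σ p) * ‖ψ p‖ ^ 2)
        ∂((volume.restrict (Set.Ioc (0 : ℝ) ε)).prod ν) < ⊤) :
    ∃ t : ℕ → ℝ, (∀ i, t i ∈ Set.Ioc (0 : ℝ) ε) ∧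
      Tendsto t atTop (nhds 0) ∧
      Tendsto (fun i => ∫⁻ k, ENNReal.ofReal (‖ψ (t i, k)‖ ^ 2) ∂ν) atTop (nhds 0) := by
  have hmeas : Measurable fun p => ENNReal.ofReal (Real.exp (σ p) * ‖ψ p‖ ^ 2) := by fun_prop
  rw [lintegral_prod _ hmeas.aemeasurable] at hfin
  obtain ⟨t, ht, ht0, hlim⟩ := exists_seq_tendsto_ofReal_mul_of_setLIntegral_ne_top hε hfin.ne
  obtain ⟨C, hC⟩ := exists_forall_norm_le_mul_dist_of_locallyLipschitz hF hF0
  have hexp : ∀ s ∈ Ioc 0 ε, ∀ k, Real.exp (-σ (s, k)) ≤ C * s := by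
    intro s hs k
    simpa [hFσ ⟨s, hs.1.le, hs.2⟩ k hs.1, Subtype.dist_eq, abs_of_pos hs.1]
      using hC ⟨s, hs.1.le, hs.2⟩ k
  have hslice : ∀ s ∈ Ioc 0 ε, ∫⁻ k, ENNReal.ofReal (‖ψ (s, k)‖ ^ 2) ∂ν ≤ C *
      (ENNReal.ofReal s * ∫⁻ k, ENNReal.ofReal (Real.exp (σ (s, k)) * ‖ψ (s, k)‖ ^ 2) ∂ν) := by
    intro s hs
    rw [← mul_assoc, ← ENNReal.ofReal_coe_nnreal, ← ENNReal.ofReal_mul C.coe_nonneg]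
    exact lintegral_ofReal_le_mul_lintegral_exp_mul (.of_forall (hexp s hs))
      (.of_forall fun _ => sq_nonneg _)
  have hbound := ENNReal.Tendsto.const_mul hlim (.inr (ENNReal.coe_ne_top (r := C)))
  rw [mul_zero] at hbound
  exact ⟨t, ht, ht0, tendsto_of_tendsto_of_tendsto_of_le_of_le tendsto_const_nhds hbound
    (fun _ => zero_le) fun i => hslice _ (ht i)⟩

/-- Combination of two steps of the proof of Theorem 1: if `e^{-σ}` extends to a locally
Lipschitz function on `[0,ε] × K` vanishing on `{0} × K` (with `K` compact, max product
metric) and `∫ e^σ ‖ψ‖² < ∞` on `(0,ε] × K`, then the slice `L²`-norms of `ψ` tend to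
zero along a sequence of times `t_i → 0`. -/
theorem exists_seq_slice_lintegral_tendsto_zero_of_locallyLipschitz
    {K : Type*} [MetricSpace K] [CompactSpace K]
    [MeasurableSpace K] [BorelSpace K] (ν : Measure K) [IsFiniteMeasure ν]
    (ε : ℝ) (hε : 0 < ε)
    {E : Type*} [NormedAddCommGroup E] [NormedSpace ℝ E] [MeasurableSpace E] [BorelSpace E]
    (σ : ℝ × K → ℝ) (hσ : Measurable σ)
    (F : Set.Icc (0 : ℝ) ε × K → ℝ) (hF : LocallyLipschitz F)
    (hFσ : ∀ (t : Set.Icc (0 : ℝ) ε) (k : K), 0 < (t : ℝ) → F (t, k) = Real.exp (-σ ((t : ℝ), k)))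
    (hF0 : ∀ k : K, F (⟨0, Set.left_mem_Icc.2 hε.le⟩, k) = 0)
    (ψ : ℝ × K → E) (hψ : Measurable ψ)
    (hfin : ∫⁻ p, ENNReal.ofReal (Real.exp (σ p) * ‖ψ p‖ ^ 2)
        ∂((volume.restrict (Set.Ioc (0 : ℝ) ε)).prod ν) < ⊤) :
    ∃ t : ℕ → ℝ, (∀ i, t i ∈ Set.Ioc (0 : ℝ) ε) ∧
      Tendsto t atTop (nhds 0) ∧
      Tendsto (fun i => ∫⁻ k, ENNReal.ofReal (‖ψ (t i, k)‖ ^ 2) ∂ν) atTop (nhds 0) :=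
  exists_seq_slice_lintegral_tendsto_zero_of_locallyLipschitz_general ν ε hε σ hσ F hF hFσ hF0 ψ hψ
    hfin
end

section
/- Let E be a finite-dimensional real normed vector space and let ρ : E → ℝ be a C² function with ρ(x) ≥ 0 for all x. Then the function x ↦ √(ρ(x)) is locally Lipschitz on E. -/
/-!
Let `f ≥ 0` have a `K`-Lipschitz derivative near `y`. Moving from `y` by a step of length `t` in a
direction of descent, Taylor's formula gives `0 ≤ f y - t ‖f' y‖ + K t² / 2`. The step
`t = ‖f' y‖ / K` yields Glaeser's inequality `‖f' y‖ ≤ √(2 K f y)`, provided that a step of this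
length stays in the region considered; this is arranged by enlarging `K`. Hence the derivative
`f' / (2 √f)` of `√f` is bounded by `√(K / 2)` where `f > 0`, and the zeros of `f` are avoided by
replacing `f` by `f + ε`.
-/

open Filter Metric Set Topology
open scoped NNReal

section Taylor

variable {E F : Type*} [NormedAddCommGroup E] [NormedSpace ℝ E]
  [NormedAddCommGroup F] [NormedSpace ℝ F]

theorem norm_sub_sub_le_of_lipschitzOnWith_hasFDerivWithinAt {f : E → F} {f' : E → E →L[ℝ] F}
    {s : Set E} {K : ℝ≥0} (hs : Convex ℝ s) (hf : ∀ x ∈ s, HasFDerivWithinAt f (f' x) s x)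
    (hf' : LipschitzOnWith K f' s) {y z : E} (hy : y ∈ s) (hz : z ∈ s) :
    ‖f z - f y - f' y (z - y)‖ ≤ K / 2 * ‖z - y‖ ^ 2 := by
  set γ : ℝ → E := ⇑(AffineMap.lineMap y z : ℝ →ᵃ[ℝ] E) with hγ
  have hγs : MapsTo γ (Icc 0 1) s := hs.mapsTo_lineMap hy hz
  set g : ℝ → F := fun t ↦ f (γ t) - f y - t • f' y (z - y) with hg
  have hderiv : ∀ t ∈ Icc (0 : ℝ) 1,
      HasDerivWithinAt g (f' (γ t) (z - y) - f' y (z - y)) (Icc 0 1) t := fun t ht ↦ by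
    have hγ' : HasDerivWithinAt γ (z - y) (Icc 0 1) t := AffineMap.hasDerivWithinAt_lineMap
    have hlin : HasDerivWithinAt (fun t : ℝ ↦ t • f' y (z - y)) (f' y (z - y)) (Icc 0 1) t := by
      simpa only [one_smul, id] using (hasDerivWithinAt_id t (Icc 0 1)).smul_const (f' y (z - y))
    exact (((hf _ (hγs ht)).comp_hasDerivWithinAt t hγ' hγs).sub_const (f y)).sub hlin
  have hbound : ∀ t ∈ Ico (0 : ℝ) 1,
      ‖f' (γ t) (z - y) - f' y (z - y)‖ ≤ K * ‖z - y‖ ^ 2 * t := fun t ht ↦ by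
    have hdist : ‖γ t - y‖ = t * ‖z - y‖ := by
      rw [hγ, ← dist_eq_norm, dist_lineMap_left, Real.norm_of_nonneg ht.1, dist_eq_norm']
    calc ‖f' (γ t) (z - y) - f' y (z - y)‖
        ≤ ‖f' (γ t) - f' y‖ * ‖z - y‖ := (f' (γ t) - f' y).le_opNorm (z - y)
      _ ≤ K * ‖γ t - y‖ * ‖z - y‖ := by
        gcongr
        exact hf'.norm_sub_le (hγs (Ico_subset_Icc_self ht)) hy
      _ = K * ‖z - y‖ ^ 2 * t := by rw [hdist]; ring
  have hquad : ∀ t : ℝ, HasDerivAt (fun t ↦ K / 2 * ‖z - y‖ ^ 2 * t ^ 2) (K * ‖z - y‖ ^ 2 * t) t :=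
    fun t ↦ ((hasDerivAt_pow 2 t).const_mul (K / 2 * ‖z - y‖ ^ 2)).congr_deriv (by norm_num; ring)
  have hle := image_norm_le_of_norm_deriv_right_le_deriv_boundary
    (fun t ht ↦ (hderiv t ht).continuousWithinAt)
    (fun t ht ↦ (hderiv t (Ico_subset_Icc_self ht)).mono_of_mem_nhdsWithin
      (Icc_mem_nhdsGE_of_mem ht))
    (by simp [hg, hγ]) hquad hbound (right_mem_Icc.2 zero_le_one)
  simpa [hg, hγ] using hle

end Taylor

section Glaeser

variable {E : Type*} [NormedAddCommGroup E] [NormedSpace ℝ E] {f : E → ℝ} {f' : E → E →L[ℝ] ℝ}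
  {K : ℝ≥0} {y : E} {r : ℝ}

theorem norm_hasFDerivWithinAt_le_div_add_of_nonneg (hr : 0 < r)
    (hf : ∀ x ∈ closedBall y r, HasFDerivWithinAt f (f' x) (closedBall y r) x)
    (hf' : LipschitzOnWith K f' (closedBall y r)) (hf₀ : ∀ x ∈ closedBall y r, 0 ≤ f x) :
    ‖f' y‖ ≤ f y / r + K / 2 * r := by
  have hy : y ∈ closedBall y r := mem_closedBall_self hr.le
  have hfy : 0 ≤ f y := hf₀ y hy
  have descent : ∀ v : E, ‖v‖ = 1 → f' y v ≤ f y / r + K / 2 * r := fun v hv ↦ by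
    have hstep : ‖y - r • v - y‖ = r := by
      rw [sub_sub_cancel_left, norm_neg, norm_smul, hv, mul_one, Real.norm_of_nonneg hr.le]
    have hz : y - r • v ∈ closedBall y r := mem_closedBall_iff_norm.2 hstep.le
    have htaylor := (le_abs_self _).trans <|
      norm_sub_sub_le_of_lipschitzOnWith_hasFDerivWithinAt (convex_closedBall y r) hf hf' hy hz
    rw [hstep, sub_sub_cancel_left, map_neg, map_smul, smul_eq_mul] at htaylor
    have hmul : r * f' y v ≤ f y + K / 2 * r ^ 2 := by linarith [hf₀ _ hz]
    calc f' y v ≤ (f y + K / 2 * r ^ 2) / r := (le_div_iff₀' hr).2 hmul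
      _ = f y / r + K / 2 * r := by field_simp
  refine ContinuousLinearMap.opNorm_le_of_unit_norm (by positivity) fun v hv ↦ ?_
  refine abs_le'.2 ⟨descent v hv, ?_⟩
  simpa only [map_neg] using descent (-v) (by rwa [norm_neg])

theorem norm_hasFDerivWithinAt_le_sqrt_of_nonneg (hr : 0 < r)
    (hf : ∀ x ∈ closedBall y r, HasFDerivWithinAt f (f' x) (closedBall y r) x)
    (hf' : LipschitzOnWith K f' (closedBall y r)) (hf₀ : ∀ x ∈ closedBall y r, 0 ≤ f x)
    (hfy : 2 * f y ≤ K * r ^ 2) :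
    ‖f' y‖ ≤ √(2 * K * f y) := by
  have hle : ∀ t, 0 < t → t ≤ r → ‖f' y‖ ≤ f y / t + K / 2 * t := fun t ht htr ↦ by
    have hsub : closedBall y t ⊆ closedBall y r := closedBall_subset_closedBall htr
    exact norm_hasFDerivWithinAt_le_div_add_of_nonneg ht
      (fun x hx ↦ (hf x (hsub hx)).mono hsub) (hf'.mono hsub) fun x hx ↦ hf₀ x (hsub hx)
  have hKr : ‖f' y‖ ≤ K * r := by
    have hdiv : f y / r ≤ K / 2 * r := by
      rw [div_le_iff₀ hr]
      linarith
    linarith [hle r hr le_rfl]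
  rcases (norm_nonneg (f' y)).eq_or_lt with hzero | hpos
  · exact hzero ▸ Real.sqrt_nonneg _
  have hK : (0 : ℝ) < K := pos_of_mul_pos_left (hpos.trans_le hKr) hr.le
  have hopt := hle (‖f' y‖ / K) (by positivity) ((div_le_iff₀' hK).2 hKr)
  refine Real.le_sqrt_of_sq_le ?_
  field_simp at hopt
  linarith

end Glaeser

section Sqrt

variable {E : Type*} [NormedAddCommGroup E] [NormedSpace ℝ E] {f : E → ℝ} {f' : E → E →L[ℝ] ℝ}
  {s : Set E}

theorem lipschitzOnWith_sqrt_of_norm_hasFDerivWithinAt_le {C : ℝ≥0} (hs : Convex ℝ s)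
    (hf : ∀ x ∈ s, HasFDerivWithinAt f (f' x) s x) (hf₀ : ∀ x ∈ s, 0 ≤ f x)
    (hf' : ∀ x ∈ s, ‖f' x‖ ≤ 2 * C * √(f x)) :
    LipschitzOnWith C (fun x ↦ √(f x)) s := by
  have hlip : ∀ ε > 0, LipschitzOnWith C (fun x ↦ √(f x + ε)) s := fun ε hε ↦ by
    have hpos : ∀ x ∈ s, 0 < f x + ε := fun x hx ↦ add_pos_of_nonneg_of_pos (hf₀ x hx) hε
    refine hs.lipschitzOnWith_of_nnnorm_hasFDerivWithin_le
      (fun x hx ↦ ((hf x hx).add_const ε).sqrt (hpos x hx).ne') fun x hx ↦ ?_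
    have hsqrt : 0 < √(f x + ε) := Real.sqrt_pos.2 (hpos x hx)
    have hnorm : ‖f' x‖ ≤ C * (2 * √(f x + ε)) := calc
      ‖f' x‖ ≤ 2 * C * √(f x) := hf' x hx
      _ ≤ 2 * C * √(f x + ε) := by gcongr; exact le_add_of_nonneg_right hε.le
      _ = C * (2 * √(f x + ε)) := by ring
    rw [← NNReal.coe_le_coe, coe_nnnorm, norm_smul, Real.norm_of_nonneg (by positivity),
      one_div_mul_eq_div]
    exact (div_le_iff₀ (by positivity)).2 hnorm
  have hlim : Tendsto (fun ε x ↦ √(f x + ε)) (𝓝[>] (0 : ℝ)) (𝓝 fun x ↦ √(f x)) := by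
    have hcont : Continuous fun ε x ↦ √(f x + ε) := by fun_prop
    simpa only [add_zero] using (hcont.tendsto 0).mono_left nhdsWithin_le_nhds
  exact (isClosed_setOfPred_lipschitzOnWith C s).mem_of_tendsto hlim
    (eventually_nhdsWithin_of_forall hlip)

theorem lipschitzOnWith_sqrt_of_lipschitzOnWith_hasFDerivWithinAt {t : Set E} {K : ℝ≥0} {r : ℝ}
    (hs : Convex ℝ s) (hr : 0 < r) (hst : ∀ y ∈ s, closedBall y r ⊆ t)
    (hf : ∀ x ∈ t, HasFDerivWithinAt f (f' x) t x) (hf' : LipschitzOnWith K f' t)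
    (hf₀ : ∀ x ∈ t, 0 ≤ f x) (hfs : ∀ y ∈ s, 2 * f y ≤ K * r ^ 2) :
    LipschitzOnWith (NNReal.sqrt (K / 2)) (fun x ↦ √(f x)) s := by
  have hsub : s ⊆ t := fun y hy ↦ hst y hy (mem_closedBall_self hr.le)
  refine lipschitzOnWith_sqrt_of_norm_hasFDerivWithinAt_le hs
    (fun x hx ↦ (hf x (hsub hx)).mono hsub) (fun x hx ↦ hf₀ x (hsub hx)) fun y hy ↦ ?_
  calc ‖f' y‖ ≤ √(2 * K * f y) :=
        norm_hasFDerivWithinAt_le_sqrt_of_nonneg hr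
          (fun x hx ↦ (hf x (hst y hy hx)).mono (hst y hy)) (hf'.mono (hst y hy))
          (fun x hx ↦ hf₀ x (hst y hy hx)) (hfs y hy)
    _ = √(2 ^ 2 * (K / 2) * f y) := by ring_nf
    _ = 2 * NNReal.sqrt (K / 2) * √(f y) := by
      rw [Real.sqrt_mul (by positivity), Real.sqrt_mul (by positivity),
        Real.sqrt_sq zero_le_two, Real.coe_sqrt, NNReal.coe_div, NNReal.coe_ofNat]

end Sqrt

theorem locallyLipschitz_sqrt_of_contDiff_general
    {E : Type*} [NormedAddCommGroup E] [NormedSpace ℝ E]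
    (ρ : E → ℝ) (hρ : Differentiable ℝ ρ) (hρ' : LocallyLipschitz (fderiv ℝ ρ))
    (hpos : ∀ x, 0 ≤ ρ x) :
    LocallyLipschitz fun x ↦ √(ρ x) := by
  intro x₀
  obtain ⟨K, U, hU, hK⟩ := hρ' x₀
  have hbdd : ∀ᶠ x in 𝓝 x₀, ρ x < ρ x₀ + 1 :=
    hρ.continuous.continuousAt.eventually_lt_const (lt_add_one _)
  obtain ⟨R, hR, hball⟩ := nhds_basis_closedBall.mem_iff.1 (inter_mem hU hbdd)
  set r := R / 2 with hr_def
  have hr : 0 < r := half_pos hR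
  set L : ℝ≥0 := max K (2 * (ρ x₀ + 1) / r ^ 2).toNNReal
  have hL : 2 * (ρ x₀ + 1) ≤ L * r ^ 2 :=
    (div_le_iff₀ (by positivity)).1 <| (Real.le_coe_toNNReal _).trans <|
      NNReal.coe_le_coe.2 (le_max_right _ _)
  have hsub : ∀ y ∈ closedBall x₀ r, closedBall y r ⊆ closedBall x₀ R := fun y hy ↦
    closedBall_subset_closedBall' (by linarith [mem_closedBall.1 hy])
  refine ⟨NNReal.sqrt (L / 2), closedBall x₀ r, closedBall_mem_nhds x₀ hr, ?_⟩
  refine lipschitzOnWith_sqrt_of_lipschitzOnWith_hasFDerivWithinAt (convex_closedBall x₀ r) hr hsub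
    (fun x _ ↦ (hρ x).hasFDerivAt.hasFDerivWithinAt)
    ((hK.mono fun x hx ↦ (hball hx).1).weaken (le_max_left _ _)) (fun x _ ↦ hpos x) fun y hy ↦ ?_
  have hy_lt : ρ y < ρ x₀ + 1 := (hball (hsub y hy (mem_closedBall_self hr.le))).2
  linarith

/-- The square root of a nonnegative `C²` function on a finite-dimensional real normed
space is locally Lipschitz. -/
theorem locallyLipschitz_sqrt_of_contDiff
    {E : Type*} [NormedAddCommGroup E] [NormedSpace ℝ E] [FiniteDimensional ℝ E]
    (ρ : E → ℝ) (hρ : ContDiff ℝ 2 ρ) (hpos : ∀ x, 0 ≤ ρ x) :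
    LocallyLipschitz fun x => Real.sqrt (ρ x) :=
  locallyLipschitz_sqrt_of_contDiff_general ρ (hρ.differentiable two_ne_zero)
    (hρ.fderiv_right (m := 1) one_add_one_eq_two.le).locallyLipschitz hpos
end
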